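/- Let E be a real inner product space, Y ⊆ E a nonempty convex set, S ⊆ Y a nonempty convex set, and F : E → E monotone on Y and with (L, M)-growth on Y. Let constants ζ > 0, 0 < w₄ < 1, 0 < β < 2, M_g > 0, and step size α with 0 < α ≤ √(1−w₄)/(√2·L). Let N ≥ 1 and g_1, …, g_N : E → ℝ with g_i(x) ≤ 0 for all x ∈ S and all i. Let v_k ∈ Y, and let z^0 = v_k, z^1, …, z^N ∈ Y be such that for each i = 1, …, N there is d_i ≠ 0, a subgradient of g_i⁺ at z^{i−1} with ‖d_i‖ ≤ M_g, and z^i is a projection of z^{i−1} − β·(g_i⁺(z^{i−1})/‖d_i‖²)·d_i onto Y; set x_k = z^N. Let G₁, G₂ ∈ E; let u_{k+1} be a projection of x_k − α·G₁ onto Y and v_{k+1} a projection of x_k − α·G₂ onto Y; set b₁ = F(x_k) − G₁ and b₂ = F(u_{k+1}) − G₂. Let h_k ∈ S, let h_{k+1} be a projection of h_k − α·b₂ onto S, and let p_k be a projection of x_k onto S. Then for all x ∈ S: 2α⟨F(x), p_k − x⟩ ≤ ‖v_k − x‖² − ‖v_{k+1} − x‖² + ‖h_k − x‖² − ‖h_{k+1}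 − x‖² − (β(2−β)/M_g²)·Σ_{i=1}^N (g_i⁺(z^{i−1}))² + ζ·‖x_k − p_k‖² + 2α⟨b₂, u_{k+1} − h_k⟩ + [ (1/ζ + 1/w₄)·‖F(x)‖² + 6M² + 7‖b₂‖² + 6‖b₁‖² ]·α². -/

import Mathlib

/-!
Projecting `w - α • G` onto a set brings the point closer to each `y` of the set, with gain
controlled by `⟪G, y - w⟫`. The feasibility steps use this with `G` a subgradient of a violated
constraint. The extragradient step uses it twice, testing `u` against `v'` and `v'` against `x`,
so that the operator value `G₂` is paired with `u - x`, at the price of `α² ‖G₁ - G₂‖²`. By the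
growth condition and the step size, the share `1 - w₄` of the gained `‖x_k - u‖²` pays for the
Lipschitz part of this price; the remaining share `w₄` and the term `ζ ‖x_k - p‖²` pay for
replacing `p` by `u` in the gap `⟪F x, p - x⟫`, where monotonicity applies. The error term `⟪b₂, u - x⟫` is recentred at `h`, an
iterate fixed before `b₂` is drawn, by projecting `h - α • b₂` onto `S`.
-/

section

open RealInnerProductSpace

variable {E : Type*} [NormedAddCommGroup E] [InnerProductSpace ℝ E]

/-- `p` is a projection of `w` onto `C`, in the variational form: it lies in `C` and the angle at
`p` between `w` and any point of `C` is not acute. For convex `C` this is the nearest point. -/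
def IsProjOn (C : Set E) (w p : E) : Prop :=
  p ∈ C ∧ ∀ y ∈ C, ⟪w - p, y - p⟫ ≤ 0

lemma two_mul_inner_le_mul_norm_sq_add (a b : E) {c : ℝ} (hc : 0 < c) :
    2 * ⟪a, b⟫ ≤ c * ‖a‖ ^ 2 + c⁻¹ * ‖b‖ ^ 2 :=
  calc 2 * ⟪a, b⟫ ≤ 2 * ‖a‖ * ‖b‖ := by linarith [real_inner_le_norm a b]
    _ ≤ c * ‖a‖ ^ 2 + c⁻¹ * ‖b‖ ^ 2 := two_mul_le_add_mul_sq hc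

namespace IsProjOn

variable {C : Set E} {w p y G : E} {α : ℝ}

lemma norm_sub_sq_add_le (hp : IsProjOn C w p) (hy : y ∈ C) :
    ‖w - p‖ ^ 2 + ‖p - y‖ ^ 2 ≤ ‖w - y‖ ^ 2 := by
  have hcos := norm_sub_sq_real (w - p) (y - p)
  rw [sub_sub_sub_cancel_right, norm_sub_rev y p] at hcos
  linarith [hp.2 y hy]

lemma norm_sub_sq_le_of_step (hp : IsProjOn C (w - α • G) p) (hy : y ∈ C) :
    ‖p - y‖ ^ 2 ≤ ‖w - y‖ ^ 2 - ‖w - p‖ ^ 2 - 2 * α * ⟪G, p - y⟫ := by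
  have hpyth := hp.norm_sub_sq_add_le hy
  rw [sub_right_comm w _ p, sub_right_comm w _ y, norm_sub_sq_real (w - p),
    norm_sub_sq_real (w - y)] at hpyth
  have hinner : ⟪w - y, α • G⟫ - ⟪w - p, α • G⟫ = α * ⟪G, p - y⟫ := by
    rw [← inner_sub_left, sub_sub_sub_cancel_left, real_inner_smul_right, real_inner_comm]
  linarith

lemma norm_sub_sq_le_add_of_step (hp : IsProjOn C (w - α • G) p) (hy : y ∈ C) :
    ‖p - y‖ ^ 2 ≤ ‖w - y‖ ^ 2 + 2 * α * ⟪G, y - w⟫ + α ^ 2 * ‖G‖ ^ 2 := by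
  have hstep := hp.norm_sub_sq_le_of_step hy
  have hyoung := two_mul_inner_le_mul_norm_sq_add (α • G) (w - p) one_pos
  rw [norm_smul, mul_pow, Real.norm_eq_abs, sq_abs, real_inner_smul_left] at hyoung
  have hsplit : ⟪G, p - y⟫ = -⟪G, y - w⟫ - ⟪G, w - p⟫ := by
    simp only [inner_sub_right]
    ring
  rw [hsplit] at hstep
  linarith

lemma norm_sub_sq_le_of_extragradient {C' : Set E} {G₁ G₂ u v x : E}
    (hu : IsProjOn C (w - α • G₁) u) (hv : IsProjOn C' (w - α • G₂) v) (hvC : v ∈ C)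
    (hx : x ∈ C') :
    ‖v - x‖ ^ 2
      ≤ ‖w - x‖ ^ 2 - ‖w - u‖ ^ 2 - 2 * α * ⟪G₂, u - x⟫ + α ^ 2 * ‖G₁ - G₂‖ ^ 2 := by
  have hu_step := hu.norm_sub_sq_le_of_step hvC
  have hv_step := hv.norm_sub_sq_le_of_step hx
  have hyoung := two_mul_inner_le_mul_norm_sq_add (-α • (G₁ - G₂)) (u - v) one_pos
  rw [norm_smul, mul_pow, norm_neg, Real.norm_eq_abs, sq_abs, real_inner_smul_left] at hyoung
  have hsplit : ⟪G₁, u - v⟫ + ⟪G₂, v - x⟫ = ⟪G₂, u - x⟫ + ⟪G₁ - G₂, u - v⟫ := by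
    simp only [inner_sub_left, inner_sub_right]
    ring
  linear_combination hu_step + hv_step + hyoung - 2 * α * hsplit

end IsProjOn

variable {C : Set E} {β K : ℝ}

lemma IsProjOn.norm_sub_sq_le_of_relaxed_cut {a b d x : E} {γ : ℝ} (hβ0 : 0 ≤ β) (hβ2 : β ≤ 2)
    (hγ : 0 ≤ γ) (hd : d ≠ 0) (hdK : ‖d‖ ≤ K) (hcut : γ + ⟪d, x - a⟫ ≤ 0)
    (hb : IsProjOn C (a - (β * (γ / ‖d‖ ^ 2)) • d) b) (hx : x ∈ C) :
    ‖b - x‖ ^ 2 ≤ ‖a - x‖ ^ 2 - β * (2 - β) / K ^ 2 * γ ^ 2 := by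
  have : 0 < ‖d‖ := norm_pos_iff.2 hd
  have : 0 ≤ β * (2 - β) := mul_nonneg hβ0 (sub_nonneg.2 hβ2)
  calc ‖b - x‖ ^ 2
      ≤ ‖a - x‖ ^ 2 + 2 * (β * (γ / ‖d‖ ^ 2)) * ⟪d, x - a⟫
          + (β * (γ / ‖d‖ ^ 2)) ^ 2 * ‖d‖ ^ 2 := hb.norm_sub_sq_le_add_of_step hx
    _ ≤ ‖a - x‖ ^ 2 + 2 * (β * (γ / ‖d‖ ^ 2)) * -γ + (β * (γ / ‖d‖ ^ 2)) ^ 2 * ‖d‖ ^ 2 := by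
      gcongr
      linarith
    _ = ‖a - x‖ ^ 2 - β * (2 - β) / ‖d‖ ^ 2 * γ ^ 2 := by
      field_simp
      ring
    _ ≤ ‖a - x‖ ^ 2 - β * (2 - β) / K ^ 2 * γ ^ 2 := by gcongr

lemma le_sub_sum_Icc_of_forall_le_sub {A : Type*} [AddCommGroup A] [PartialOrder A]
    [IsOrderedAddMonoid A] {r c : ℕ → A} {N : ℕ}
    (h : ∀ i ∈ Finset.Icc 1 N, r i ≤ r (i - 1) - c i) :
    r N ≤ r 0 - ∑ i ∈ Finset.Icc 1 N, c i := by
  induction N with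
  | zero => simp
  | succ N ih =>
    have hprev := ih fun i hi => h i (Finset.Icc_subset_Icc_right N.le_succ hi)
    have hlast : r (N + 1) ≤ r N - c (N + 1) := h (N + 1) (by simp)
    rw [Finset.sum_Icc_succ_top (by omega), ← sub_sub]
    exact hlast.trans (sub_le_sub_right hprev _)

lemma norm_sub_sq_le_sub_sum_of_relaxed_cuts {z d : ℕ → E} {γ : ℕ → ℝ} {N : ℕ} {x : E}
    (hβ0 : 0 ≤ β) (hβ2 : β ≤ 2) (hγ : ∀ i ∈ Finset.Icc 1 N, 0 ≤ γ i)
    (hd : ∀ i ∈ Finset.Icc 1 N, d i ≠ 0) (hdK : ∀ i ∈ Finset.Icc 1 N, ‖d i‖ ≤ K)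
    (hcut : ∀ i ∈ Finset.Icc 1 N, γ i + ⟪d i, x - z (i - 1)⟫ ≤ 0)
    (hz : ∀ i ∈ Finset.Icc 1 N,
      IsProjOn C (z (i - 1) - (β * (γ i / ‖d i‖ ^ 2)) • d i) (z i))
    (hx : x ∈ C) :
    ‖z N - x‖ ^ 2
      ≤ ‖z 0 - x‖ ^ 2 - β * (2 - β) / K ^ 2 * ∑ i ∈ Finset.Icc 1 N, γ i ^ 2 := by
  rw [Finset.mul_sum]
  exact le_sub_sum_Icc_of_forall_le_sub (r := fun i => ‖z i - x‖ ^ 2) fun i hi =>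
    (hz i hi).norm_sub_sq_le_of_relaxed_cut hβ0 hβ2 (hγ i hi) (hd i hi) (hdK i hi) (hcut i hi) hx

lemma norm_sub_sq_le_of_growth {V W : Type*} [SeminormedAddCommGroup V]
    [SeminormedAddCommGroup W] {F : V → W} {L M : ℝ} {a u : V}
    (hgrowth : ‖F a - F u‖ ≤ L * ‖a - u‖ + M) (G₁ G₂ : W) :
    ‖G₁ - G₂‖ ^ 2
      ≤ 2 * L ^ 2 * ‖a - u‖ ^ 2 + 6 * (M ^ 2 + ‖F u - G₂‖ ^ 2 + ‖F a - G₁‖ ^ 2) := by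
  have htriangle : ‖G₁ - G₂‖ ≤ L * ‖a - u‖ + (M + ‖F u - G₂‖ + ‖F a - G₁‖) :=
    calc ‖G₁ - G₂‖ = ‖F a - F u + (F u - G₂) - (F a - G₁)‖ := by congr 1; abel
      _ ≤ ‖F a - F u‖ + ‖F u - G₂‖ + ‖F a - G₁‖ :=
        (norm_sub_le _ _).trans (by gcongr; exact norm_add_le _ _)
      _ ≤ L * ‖a - u‖ + (M + ‖F u - G₂‖ + ‖F a - G₁‖) := by linarith
  have hsq_three (r s t : ℝ) : (r + s + t) ^ 2 ≤ 3 * (r ^ 2 + s ^ 2 + t ^ 2) := by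
    linarith [two_mul_le_add_sq r s, two_mul_le_add_sq r t, two_mul_le_add_sq s t]
  calc ‖G₁ - G₂‖ ^ 2 ≤ (L * ‖a - u‖ + (M + ‖F u - G₂‖ + ‖F a - G₁‖)) ^ 2 := by gcongr
    _ ≤ 2 * ((L * ‖a - u‖) ^ 2 + (M + ‖F u - G₂‖ + ‖F a - G₁‖) ^ 2) := add_sq_le
    _ ≤ 2 * L ^ 2 * ‖a - u‖ ^ 2 + 6 * (M ^ 2 + ‖F u - G₂‖ ^ 2 + ‖F a - G₁‖ ^ 2) := by
      linarith [hsq_three M ‖F u - G₂‖ ‖F a - G₁‖]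

variable {F : E → E} {L M α ζ w₄ : ℝ}

lemma two_mul_inner_sub_le_of_monotone {a p u x : E} (hα : 0 ≤ α) (hζ : 0 < ζ) (hw₄ : 0 < w₄)
    (hmono : 0 ≤ ⟪F u - F x, u - x⟫) :
    2 * α * ⟪F x, p - x⟫
      ≤ 2 * α * ⟪F u, u - x⟫ + w₄ * ‖a - u‖ ^ 2 + ζ * ‖a - p‖ ^ 2
        + (1 / ζ + 1 / w₄) * ‖F x‖ ^ 2 * α ^ 2 := by
  have hyoung (b : E) {c : ℝ} (hc : 0 < c) :
      2 * α * ⟪F x, b⟫ ≤ c * ‖b‖ ^ 2 + 1 / c * ‖F x‖ ^ 2 * α ^ 2 := by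
    have h := two_mul_inner_le_mul_norm_sq_add b (α • F x) hc
    rw [norm_smul, mul_pow, Real.norm_eq_abs, sq_abs, real_inner_smul_right,
      real_inner_comm] at h
    rw [one_div]
    linarith
  have hsplit : ⟪F x, p - x⟫ = ⟪F x, p - a⟫ + ⟪F x, a - u⟫ + ⟪F x, u - x⟫ := by
    simp only [inner_sub_right]
    ring
  have hp_young := hyoung (p - a) hζ
  rw [norm_sub_rev] at hp_young
  have hFx_le : α * ⟪F x, u - x⟫ ≤ α * ⟪F u, u - x⟫ :=
    mul_le_mul_of_nonneg_left (by simpa only [inner_sub_left, sub_nonneg] using hmono) hα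
  rw [hsplit]
  linarith [hyoung (a - u) hw₄]

lemma sq_mul_le_of_le_sqrt_div (hL : 0 < L) (hα0 : 0 < α)
    (hα : α ≤ √(1 - w₄) / (√2 * L)) : α ^ 2 * (2 * L ^ 2) ≤ 1 - w₄ := by
  rw [le_div_iff₀ (by positivity), Real.le_sqrt' (by positivity)] at hα
  simpa [mul_pow] using hα

theorem stmt_10_general {Y S : Set E} (hSY : S ⊆ Y)
    (hmono : ∀ x ∈ Y, ∀ y ∈ Y, 0 ≤ ⟪F x - F y, x - y⟫)
    (hgrowth : ∀ x ∈ Y, ∀ y ∈ Y, ‖F x - F y‖ ≤ L * ‖x - y‖ + M)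
    {β Mg : ℝ} (hζ : 0 < ζ) (hw₄ : 0 < w₄) (hβ0 : 0 ≤ β) (hβ2 : β ≤ 2)
    (hα0 : 0 ≤ α) (hα : α ^ 2 * (2 * L ^ 2) ≤ 1 - w₄)
    {N : ℕ} {g : ℕ → E → ℝ} (hg : ∀ i ∈ Finset.Icc 1 N, ∀ x ∈ S, g i x ≤ 0)
    {z d : ℕ → E} (hzN : z N ∈ Y)
    (hd : ∀ i ∈ Finset.Icc 1 N, d i ≠ 0) (hdnorm : ∀ i ∈ Finset.Icc 1 N, ‖d i‖ ≤ Mg)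
    (hsub : ∀ i ∈ Finset.Icc 1 N, ∀ y : E,
      max (g i (z (i - 1))) 0 + ⟪d i, y - z (i - 1)⟫ ≤ max (g i y) 0)
    (hz : ∀ i ∈ Finset.Icc 1 N,
      IsProjOn Y (z (i - 1) - (β * (max (g i (z (i - 1))) 0 / ‖d i‖ ^ 2)) • d i) (z i))
    {G₁ G₂ u v' h h' : E} (hu : IsProjOn Y (z N - α • G₁) u)
    (hv' : IsProjOn Y (z N - α • G₂) v') (hh' : IsProjOn S (h - α • (F u - G₂)) h')
    (p : E) {x : E} (hx : x ∈ S) :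
    2 * α * ⟪F x, p - x⟫
      ≤ ‖z 0 - x‖ ^ 2 - ‖v' - x‖ ^ 2 + ‖h - x‖ ^ 2 - ‖h' - x‖ ^ 2
        - β * (2 - β) / Mg ^ 2 * ∑ i ∈ Finset.Icc 1 N, (max (g i (z (i - 1))) 0) ^ 2
        + ζ * ‖z N - p‖ ^ 2
        + 2 * α * ⟪F u - G₂, u - h⟫
        + ((1 / ζ + 1 / w₄) * ‖F x‖ ^ 2 + 6 * M ^ 2
            + 7 * ‖F u - G₂‖ ^ 2 + 6 * ‖F (z N) - G₁‖ ^ 2) * α ^ 2 := by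
  have hcut : ∀ i ∈ Finset.Icc 1 N, max (g i (z (i - 1))) 0 + ⟪d i, x - z (i - 1)⟫ ≤ 0 :=
    fun i hi => (hsub i hi x).trans_eq (max_eq_right (hg i hi x hx))
  have hfeas := norm_sub_sq_le_sub_sum_of_relaxed_cuts hβ0 hβ2 (fun i _ => le_max_right _ _)
    hd hdnorm hcut hz (hSY hx)
  have hextra := hu.norm_sub_sq_le_of_extragradient hv' hv'.1 (hSY hx)
  have haux := hh'.norm_sub_sq_le_add_of_step hx
  have hgap := two_mul_inner_sub_le_of_monotone (a := z N) (p := p) hα0 hζ hw₄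
    (hmono u hu.1 x (hSY hx))
  have herr : α ^ 2 * ‖G₁ - G₂‖ ^ 2 ≤ (1 - w₄) * ‖z N - u‖ ^ 2
      + α ^ 2 * (6 * (M ^ 2 + ‖F u - G₂‖ ^ 2 + ‖F (z N) - G₁‖ ^ 2)) := by
    linarith [
      mul_le_mul_of_nonneg_left (norm_sub_sq_le_of_growth (hgrowth _ hzN u hu.1) G₁ G₂)
        (sq_nonneg α),
      mul_le_mul_of_nonneg_right hα (sq_nonneg ‖z N - u‖)]
  have hsplit : ⟪F u, u - x⟫ = ⟪G₂, u - x⟫ + ⟪F u - G₂, u - h⟫ - ⟪F u - G₂, x - h⟫ := by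
    simp only [inner_sub_left, inner_sub_right]
    ring
  linear_combination hfeas + hextra + haux + hgap + herr + 2 * α * hsplit

end

open RealInnerProductSpace in
/-- Lemma `lem_Kor2`: one iteration of the modified stochastic Korpelevich method combined
with the random feasibility steps, where `v_k = z 0`, `x_k = z N`,
`b₁ = F(x_k) − G₁`, `b₂ = F(u_{k+1}) − G₂`. -/
theorem stmt_10 {E : Type*} [NormedAddCommGroup E] [InnerProductSpace ℝ E]
    (Y : Set E) (hYne : Y.Nonempty) (hYconv : Convex ℝ Y)
    (S : Set E) (hSY : S ⊆ Y) (hSne : S.Nonempty) (hSconv : Convex ℝ S)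
    (F : E → E)
    (hmono : ∀ x ∈ Y, ∀ y ∈ Y, 0 ≤ ⟪F x - F y, x - y⟫)
    (L M : ℝ) (hL : 0 < L) (hM : 0 ≤ M)
    (hgrowth : ∀ x ∈ Y, ∀ y ∈ Y, ‖F x - F y‖ ≤ L * ‖x - y‖ + M)
    (ζ w₄ β Mg α : ℝ)
    (hζ : 0 < ζ) (hw₄0 : 0 < w₄) (hw₄1 : w₄ < 1)
    (hβ0 : 0 < β) (hβ2 : β < 2) (hMg : 0 < Mg)
    (hα0 : 0 < α) (hα : α ≤ Real.sqrt (1 - w₄) / (Real.sqrt 2 * L))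
    (N : ℕ) (hN : 1 ≤ N)
    (g : ℕ → E → ℝ) (hg : ∀ i ∈ Finset.Icc 1 N, ∀ x ∈ S, g i x ≤ 0)
    (z : ℕ → E) (hzY : ∀ i ≤ N, z i ∈ Y)
    (d : ℕ → E)
    (hd : ∀ i ∈ Finset.Icc 1 N, d i ≠ 0)
    (hdnorm : ∀ i ∈ Finset.Icc 1 N, ‖d i‖ ≤ Mg)
    (hsub : ∀ i ∈ Finset.Icc 1 N, ∀ y : E,
      max (g i (z (i - 1))) 0 + ⟪d i, y - z (i - 1)⟫ ≤ max (g i y) 0)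
    (hzproj : ∀ i ∈ Finset.Icc 1 N, ∀ y ∈ Y,
      ⟪z (i - 1) - (β * (max (g i (z (i - 1))) 0 / ‖d i‖ ^ 2)) • d i - z i, y - z i⟫ ≤ 0)
    (G₁ G₂ : E)
    (u : E) (hu : u ∈ Y)
    (huproj : ∀ y ∈ Y, ⟪z N - α • G₁ - u, y - u⟫ ≤ 0)
    (v' : E) (hv' : v' ∈ Y)
    (hv'proj : ∀ y ∈ Y, ⟪z N - α • G₂ - v', y - v'⟫ ≤ 0)
    (hk hk1 pk : E)
    (hhk : hk ∈ S)
    (hhk1 : hk1 ∈ S)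
    (hhk1proj : ∀ y ∈ S, ⟪hk - α • (F u - G₂) - hk1, y - hk1⟫ ≤ 0)
    (hpk : pk ∈ S) (hpkproj : ∀ y ∈ S, ⟪z N - pk, y - pk⟫ ≤ 0)
    (x : E) (hx : x ∈ S) :
    2 * α * ⟪F x, pk - x⟫
      ≤ ‖z 0 - x‖ ^ 2 - ‖v' - x‖ ^ 2 + ‖hk - x‖ ^ 2 - ‖hk1 - x‖ ^ 2
        - β * (2 - β) / Mg ^ 2 * ∑ i ∈ Finset.Icc 1 N, (max (g i (z (i - 1))) 0) ^ 2
        + ζ * ‖z N - pk‖ ^ 2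
        + 2 * α * ⟪F u - G₂, u - hk⟫
        + ((1 / ζ + 1 / w₄) * ‖F x‖ ^ 2 + 6 * M ^ 2
            + 7 * ‖F u - G₂‖ ^ 2 + 6 * ‖F (z N) - G₁‖ ^ 2) * α ^ 2 :=
  stmt_10_general hSY hmono hgrowth hζ hw₄0 hβ0.le hβ2.le hα0.le
    (sq_mul_le_of_le_sqrt_div hL hα0 hα) hg (hzY N le_rfl) hd hdnorm hsub
    (fun i hi => ⟨hzY i (Finset.mem_Icc.1 hi).2, hzproj i hi⟩)
    ⟨hu, huproj⟩ ⟨hv', hv'proj⟩ ⟨hhk1, hhk1proj⟩ pk hx
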